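/- Let (x₀,y₀) be a positive fixed point of the quartic operator Q (so x₀>0, y₀>0 and Q(x₀,y₀)=(x₀,y₀)). Then ξ₀ = y₀/x₀ is a root of the quintic polynomial P₅, i.e. μ₀ξ₀⁵ + μ₁ξ₀⁴ + μ₂ξ₀³ + μ₃ξ₀² + μ₄ξ₀ − μ₅ = 0. -/

import Mathlib

/-! A homogeneous map `F` that sends `(x, y)` with `x ≠ 0` to a multiple of itself also sends
`(1, ξ)`, where `ξ = y / x`, to a multiple of itself, so the coordinates `p`, `q` of `F (1, ξ)`
satisfy `q = ξ * p`. For the quartic operator, `ξ * p - q` is the quintic polynomial at `ξ`. -/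

lemma map_smul_eq_smul_smul_of_homogeneous {G V : Type*} [GroupWithZero G] [MulAction G V]
    {n : ℕ} {F : V → V} (hF : ∀ (c : G) (v : V), F (c • v) = c ^ n • F v)
    {c r : G} {v : V} (hc : c ≠ 0) (hv : F v = r • v) :
    F (c • v) = (c ^ n * r * c⁻¹) • c • v := by
  rw [hF, hv, smul_smul, smul_smul, inv_mul_cancel_right₀ hc]

section Field

variable {K : Type*} [Field K]

lemma snd_map_one_div_eq_of_homogeneous {n : ℕ} {F : K × K → K × K}
    (hF : ∀ (c : K) (v : K × K), F (c • v) = c ^ n • F v)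
    {x y r : K} (hx : x ≠ 0) (hxy : F (x, y) = r • (x, y)) :
    (F (1, y / x)).2 = y / x * (F (1, y / x)).1 := by
  have hscale : x⁻¹ • (x, y) = (1, y / x) := by
    rw [Prod.smul_mk, smul_eq_mul, smul_eq_mul, inv_mul_cancel₀ hx, inv_mul_eq_div]
  have heigen := map_smul_eq_smul_smul_of_homogeneous hF (inv_ne_zero hx) hxy
  rw [hscale] at heigen
  simp only [heigen, Prod.smul_mk, smul_eq_mul, mul_one]
  exact mul_comm _ _

theorem stmt_0_general (a₀ a₁ a₂ a₃ a₄ b₀ b₁ b₂ b₃ b₄ : K) (Q : K × K → K × K)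
    (hQ : ∀ x y : K, Q (x, y) =
      (a₀ * x ^ 4 + 4 * a₁ * x ^ 3 * y + 6 * a₂ * x ^ 2 * y ^ 2 + 4 * a₃ * x * y ^ 3 + a₄ * y ^ 4,
       b₀ * x ^ 4 + 4 * b₁ * x ^ 3 * y + 6 * b₂ * x ^ 2 * y ^ 2 + 4 * b₃ * x * y ^ 3 + b₄ * y ^ 4))
    {x₀ y₀ r : K} (hx₀ : x₀ ≠ 0) (heigen : Q (x₀, y₀) = r • (x₀, y₀)) :
    a₄ * (y₀ / x₀) ^ 5 + (4 * a₃ - b₄) * (y₀ / x₀) ^ 4 + (6 * a₂ - 4 * b₃) * (y₀ / x₀) ^ 3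
      + (4 * a₁ - 6 * b₂) * (y₀ / x₀) ^ 2 + (a₀ - 4 * b₁) * (y₀ / x₀) - b₀ = 0 := by
  have hhom (c : K) (v : K × K) : Q (c • v) = c ^ 4 • Q v := by
    obtain ⟨x, y⟩ := v
    simp only [Prod.smul_mk, smul_eq_mul, hQ]
    congr 1 <;> ring
  have hratio := snd_map_one_div_eq_of_homogeneous hhom hx₀ heigen
  rw [hQ] at hratio
  linear_combination -hratio

end Field

theorem stmt_0 (a₀ a₁ a₂ a₃ a₄ b₀ b₁ b₂ b₃ b₄ : ℝ)
    (ha₀ : 0 < a₀) (ha₁ : 0 < a₁) (ha₂ : 0 < a₂) (ha₃ : 0 < a₃) (ha₄ : 0 < a₄)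
    (hb₀ : 0 < b₀) (hb₁ : 0 < b₁) (hb₂ : 0 < b₂) (hb₃ : 0 < b₃) (hb₄ : 0 < b₄)
    (Q : ℝ × ℝ → ℝ × ℝ)
    (hQ : ∀ x y : ℝ, Q (x, y) =
      (a₀ * x ^ 4 + 4 * a₁ * x ^ 3 * y + 6 * a₂ * x ^ 2 * y ^ 2 + 4 * a₃ * x * y ^ 3 + a₄ * y ^ 4,
       b₀ * x ^ 4 + 4 * b₁ * x ^ 3 * y + 6 * b₂ * x ^ 2 * y ^ 2 + 4 * b₃ * x * y ^ 3 + b₄ * y ^ 4))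
    (x₀ y₀ : ℝ) (hx₀ : 0 < x₀) (hy₀ : 0 < y₀) (hfix : Q (x₀, y₀) = (x₀, y₀)) :
    a₄ * (y₀ / x₀) ^ 5 + (4 * a₃ - b₄) * (y₀ / x₀) ^ 4 + (6 * a₂ - 4 * b₃) * (y₀ / x₀) ^ 3
      + (4 * a₁ - 6 * b₂) * (y₀ / x₀) ^ 2 + (a₀ - 4 * b₁) * (y₀ / x₀) - b₀ = 0 :=
  stmt_0_general a₀ a₁ a₂ a₃ a₄ b₀ b₁ b₂ b₃ b₄ Q hQ hx₀.ne' (hfix.trans (one_smul ℝ _).symm)
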